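/- arXiv:2002.10291 — 4 statements merged into one kernel-verified Lean document; each statement's English description precedes it below -/
import Mathlib

section
/- Linearization around a straight nominal path: specialize to β₂ᵣ = β₃ᵣ = 0 and uᵣ = 0 (so κ = 0 and Eᵣ = 1). Then the map (x̃, ũ) ↦ f̃(x̃, ũ) is differentiable at the origin, its Jacobian with respect to x̃ = (z̃₃, θ̃₃, β̃₃, β̃₂) at (0, 0) equals v̄ · A with A the 4×4 matrix with rows (0, 1, 0, 0), (0, 0, 1/L₃, 0), (0, 0, −1/L₃, 1/L₂), (0, 0, 0, −1/L₂), and its partial derivative with respect to ũ at (0, 0) equals v̄ · (0, 0, −M₁/L₂, (L₂ + M₁)/L₂). -/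
/-!
Each of the last three components of the error model has the form
`v̄ (σ(z̃₃, θ̃₃) φ(β₃, β₂, u) - φ(β₃ᵣ, β₂ᵣ, uᵣ))`, with the common scale
`σ(z, θ) = (1 - κ z) / cos θ`. Since `σ = 1` and `dσ = -κ dz` at the origin, its differential there
is `v̄ (dφ - κ φ(β₃ᵣ, β₂ᵣ, uᵣ) dz̃₃)`, and only the rates `φ` remain to be differentiated.
With `E = cos β₂ + M₁ u sin β₂` and `N = sin β₂ - M₁ u cos β₂`, the identities
`E² + N² = 1 + M₁² u²` and `E cos β₂ + N sin β₂ = 1` put `dφ` in closed form. On a straight path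
`κ = 0`, so `z̃₃` drops out.
-/

namespace TwoTrailer

lemma hasFDerivAt_div {𝕜 V : Type*} [NontriviallyNormedField 𝕜] [NormedAddCommGroup V]
    [NormedSpace 𝕜 V] {g h : V → 𝕜} {g' h' : V →L[𝕜] 𝕜} {x : V} (hg : HasFDerivAt g g' x)
    (hh : HasFDerivAt h h' x) (h_ne : h x ≠ 0) :
    HasFDerivAt (fun p => g p / h p) ((h x ^ 2)⁻¹ • (h x • g' - g x • h')) x := by
  have hinv := (hasDerivAt_inv h_ne).comp_hasFDerivAt x hh
  simp only [div_eq_mul_inv]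
  refine (hg.fun_mul hinv).congr_fderiv ?_
  ext v
  simp only [Function.comp_apply, add_apply, sub_apply, smul_apply, smul_eq_mul]
  field_simp
  ring

section Trigonometric

variable {V : Type*} [NormedAddCommGroup V] [NormedSpace ℝ V] {x : V}
  {g θ : V → ℝ} {g' θ' : V →L[ℝ] ℝ}

lemma hasFDerivAt_tan_comp (hθ : HasFDerivAt θ θ' x) (hcos : Real.cos (θ x) ≠ 0) :
    HasFDerivAt (fun p => Real.tan (θ p)) ((1 + Real.tan (θ x) ^ 2) • θ') x := by
  have hsec : 1 / Real.cos (θ x) ^ 2 = 1 + Real.tan (θ x) ^ 2 := by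
    rw [one_div, ← Real.inv_one_add_tan_sq hcos, inv_inv]
  exact hsec ▸ (Real.hasDerivAt_tan hcos).comp_hasFDerivAt x hθ

lemma hasFDerivAt_tan_div_const (L : ℝ) (hθ : HasFDerivAt θ θ' x) (hcos : Real.cos (θ x) ≠ 0) :
    HasFDerivAt (fun p => Real.tan (θ p) / L) (((1 + Real.tan (θ x) ^ 2) / L) • θ') x := by
  simpa only [← div_eq_mul_inv, smul_smul, inv_mul_eq_div] using
    (hasFDerivAt_tan_comp hθ hcos).mul_const L⁻¹

lemma hasFDerivAt_div_cos (hg : HasFDerivAt g g' x) (hθ : HasFDerivAt θ θ' x)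
    (hcos : Real.cos (θ x) ≠ 0) :
    HasFDerivAt (fun p => g p / Real.cos (θ p))
      ((1 / Real.cos (θ x)) • g' + (Real.tan (θ x) * (g x / Real.cos (θ x))) • θ') x := by
  refine (hasFDerivAt_div hg hθ.cos hcos).congr_fderiv ?_
  ext v
  simp only [Real.tan_eq_sin_div_cos, add_apply, sub_apply, smul_apply, smul_eq_mul]
  field_simp
  ring

end Trigonometric

/-- The speed of the dolly along its own axis, per unit speed of the tractor, at joint angle `β`,
tractor curvature `u` and hitching offset `M`. -/
noncomputable def dollySpeed (M β u : ℝ) : ℝ :=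
  Real.cos β + M * u * Real.sin β

/-- The component of the hitch velocity transverse to the dolly, per unit speed of the tractor;
dividing by the dolly length gives the yaw rate of the dolly. -/
noncomputable def lateralSpeed (M β u : ℝ) : ℝ :=
  Real.sin β - M * Real.cos β * u

/-- The distance travelled by the trailer per unit of arc length along a nominal path of curvature
`κ`, at lateral error `z` and heading error `θ`. -/
noncomputable def arcScale (κ z θ : ℝ) : ℝ :=
  (1 - κ * z) / Real.cos θ

/-- The rate of the joint angle `β₃` between trailer and dolly, per unit distance travelled by the
trailer. -/
noncomputable def trailerJointRate (L₂ L₃ M β₃ β₂ u : ℝ) : ℝ :=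
  lateralSpeed M β₂ u / (L₂ * (Real.cos β₃ * dollySpeed M β₂ u)) - Real.tan β₃ / L₃

/-- The rate of the joint angle `β₂` between dolly and tractor, per unit distance travelled by the
trailer. -/
noncomputable def dollyJointRate (L₂ M β₃ β₂ u : ℝ) : ℝ :=
  (u - Real.sin β₂ / L₂ + M / L₂ * Real.cos β₂ * u) / (Real.cos β₃ * dollySpeed M β₂ u)

lemma dollySpeed_sq_add_lateralSpeed_sq (M β u : ℝ) :
    dollySpeed M β u ^ 2 + lateralSpeed M β u ^ 2 = 1 + M ^ 2 * u ^ 2 := by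
  simp only [dollySpeed, lateralSpeed]
  linear_combination (1 + M ^ 2 * u ^ 2) * Real.sin_sq_add_cos_sq β

lemma dollySpeed_mul_cos_add_lateralSpeed_mul_sin (M β u : ℝ) :
    dollySpeed M β u * Real.cos β + lateralSpeed M β u * Real.sin β = 1 := by
  simp only [dollySpeed, lateralSpeed]
  linear_combination Real.sin_sq_add_cos_sq β

lemma trailerJointRate_eq_div_cos (L₂ L₃ M β₃ β₂ u : ℝ) :
    trailerJointRate L₂ L₃ M β₃ β₂ u =
      lateralSpeed M β₂ u / dollySpeed M β₂ u / L₂ / Real.cos β₃ - Real.tan β₃ / L₃ := by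
  simp only [trailerJointRate]
  ring

lemma dollyJointRate_eq_div_cos (L₂ M β₃ β₂ u : ℝ) :
    dollyJointRate L₂ M β₃ β₂ u =
      (u / dollySpeed M β₂ u - lateralSpeed M β₂ u / dollySpeed M β₂ u / L₂) / Real.cos β₃ := by
  simp only [dollyJointRate, lateralSpeed]
  ring

section ErrorModel

variable {V : Type*} [NormedAddCommGroup V] [NormedSpace ℝ V] {x : V}
  {g z θ β₃ β₂ u : V → ℝ} {g' z' θ' β₃' β₂' u' : V →L[ℝ] ℝ}

lemma hasFDerivAt_mul_arcScale_mul_sub (v κ c : ℝ) (hz : HasFDerivAt z z' x)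
    (hθ : HasFDerivAt θ θ' x) (hg : HasFDerivAt g g' x) (hz0 : z x = 0) (hθ0 : θ x = 0) :
    HasFDerivAt (fun p => v * (arcScale κ (z p) (θ p) * g p - c))
      (v • (g' - (κ * g x) • z')) x := by
  have hscale := hasFDerivAt_div_cos ((hz.const_mul κ).const_sub 1) hθ (by simp [hθ0])
  refine (((hscale.fun_mul hg).sub_const c).const_mul v).congr_fderiv ?_
  ext p
  simp only [hz0, hθ0, Real.cos_zero, Real.tan_zero, add_apply, sub_apply, neg_apply, smul_apply,
    smul_eq_mul]
  ring

lemma hasFDerivAt_mul_one_sub_mul_tan (v κ : ℝ) (hz : HasFDerivAt z z' x)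
    (hθ : HasFDerivAt θ θ' x) (hz0 : z x = 0) (hθ0 : θ x = 0) :
    HasFDerivAt (fun p => v * ((1 - κ * z p) * Real.tan (θ p))) (v • θ') x := by
  have htan := hasFDerivAt_tan_comp hθ (by simp [hθ0])
  refine ((((hz.const_mul κ).const_sub 1).fun_mul htan).const_mul v).congr_fderiv ?_
  ext p
  simp [hz0, hθ0]

lemma hasFDerivAt_dollySpeed (M : ℝ) (hβ₂ : HasFDerivAt β₂ β₂' x) (hu : HasFDerivAt u u' x) :
    HasFDerivAt (fun p => dollySpeed M (β₂ p) (u p))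
      (-lateralSpeed M (β₂ x) (u x) • β₂' + (M * Real.sin (β₂ x)) • u') x := by
  refine (hβ₂.cos.fun_add ((hu.const_mul M).fun_mul hβ₂.sin)).congr_fderiv ?_
  ext v
  simp only [lateralSpeed, add_apply, smul_apply, smul_eq_mul]
  ring

lemma hasFDerivAt_lateralSpeed (M : ℝ) (hβ₂ : HasFDerivAt β₂ β₂' x) (hu : HasFDerivAt u u' x) :
    HasFDerivAt (fun p => lateralSpeed M (β₂ p) (u p))
      (dollySpeed M (β₂ x) (u x) • β₂' - (M * Real.cos (β₂ x)) • u') x := by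
  refine (hβ₂.sin.fun_sub ((hβ₂.cos.const_mul M).fun_mul hu)).congr_fderiv ?_
  ext v
  simp only [dollySpeed, add_apply, sub_apply, smul_apply, smul_eq_mul]
  ring

lemma hasFDerivAt_lateralSpeed_div_dollySpeed (M : ℝ) (hβ₂ : HasFDerivAt β₂ β₂' x)
    (hu : HasFDerivAt u u' x) (hE : dollySpeed M (β₂ x) (u x) ≠ 0) :
    HasFDerivAt (fun p => lateralSpeed M (β₂ p) (u p) / dollySpeed M (β₂ p) (u p))
      (((1 + M ^ 2 * u x ^ 2) / dollySpeed M (β₂ x) (u x) ^ 2) • β₂' -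
        (M / dollySpeed M (β₂ x) (u x) ^ 2) • u') x := by
  have hquot :=
    hasFDerivAt_div (hasFDerivAt_lateralSpeed M hβ₂ hu) (hasFDerivAt_dollySpeed M hβ₂ hu) hE
  refine hquot.congr_fderiv ?_
  ext v
  simp only [add_apply, sub_apply, smul_apply, smul_eq_mul]
  field_simp
  linear_combination β₂' v * dollySpeed_sq_add_lateralSpeed_sq M (β₂ x) (u x) -
    M * u' v * dollySpeed_mul_cos_add_lateralSpeed_mul_sin M (β₂ x) (u x)

lemma hasFDerivAt_div_dollySpeed (M : ℝ) (hβ₂ : HasFDerivAt β₂ β₂' x)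
    (hu : HasFDerivAt u u' x) (hE : dollySpeed M (β₂ x) (u x) ≠ 0) :
    HasFDerivAt (fun p => u p / dollySpeed M (β₂ p) (u p))
      ((u x * lateralSpeed M (β₂ x) (u x) / dollySpeed M (β₂ x) (u x) ^ 2) • β₂' +
        (Real.cos (β₂ x) / dollySpeed M (β₂ x) (u x) ^ 2) • u') x := by
  refine (hasFDerivAt_div hu (hasFDerivAt_dollySpeed M hβ₂ hu) hE).congr_fderiv ?_
  ext v
  simp only [add_apply, sub_apply, smul_apply, smul_eq_mul]
  field_simp
  simp only [dollySpeed]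
  ring

lemma hasFDerivAt_trailerJointRate (L₂ L₃ M : ℝ) (hβ₃ : HasFDerivAt β₃ β₃' x)
    (hβ₂ : HasFDerivAt β₂ β₂' x) (hu : HasFDerivAt u u' x) (hcos : Real.cos (β₃ x) ≠ 0)
    (hE : dollySpeed M (β₂ x) (u x) ≠ 0) :
    HasFDerivAt (fun p => trailerJointRate L₂ L₃ M (β₃ p) (β₂ p) (u p))
      ((Real.tan (β₃ x) * trailerJointRate L₂ L₃ M (β₃ x) (β₂ x) (u x) - 1 / L₃) • β₃' +
        ((1 + M ^ 2 * u x ^ 2) /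
          (L₂ * Real.cos (β₃ x) * dollySpeed M (β₂ x) (u x) ^ 2)) • β₂' -
        (M / (L₂ * Real.cos (β₃ x) * dollySpeed M (β₂ x) (u x) ^ 2)) • u') x := by
  simp only [trailerJointRate_eq_div_cos]
  have hturn := (hasFDerivAt_lateralSpeed_div_dollySpeed M hβ₂ hu hE).mul_const L₂⁻¹
  simp only [← div_eq_mul_inv] at hturn
  have hrate := (hasFDerivAt_div_cos hturn hβ₃ hcos).fun_sub
    (hasFDerivAt_tan_div_const L₃ hβ₃ hcos)
  refine hrate.congr_fderiv ?_
  ext v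
  simp only [add_apply, sub_apply, smul_apply, smul_eq_mul]
  ring

lemma hasFDerivAt_dollyJointRate {L₂ : ℝ} (hL₂ : L₂ ≠ 0) (M : ℝ) (hβ₃ : HasFDerivAt β₃ β₃' x)
    (hβ₂ : HasFDerivAt β₂ β₂' x) (hu : HasFDerivAt u u' x) (hcos : Real.cos (β₃ x) ≠ 0)
    (hE : dollySpeed M (β₂ x) (u x) ≠ 0) :
    HasFDerivAt (fun p => dollyJointRate L₂ M (β₃ p) (β₂ p) (u p))
      ((Real.tan (β₃ x) * dollyJointRate L₂ M (β₃ x) (β₂ x) (u x)) • β₃' +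
        ((L₂ * u x * lateralSpeed M (β₂ x) (u x) - (1 + M ^ 2 * u x ^ 2)) /
          (L₂ * Real.cos (β₃ x) * dollySpeed M (β₂ x) (u x) ^ 2)) • β₂' +
        ((L₂ * Real.cos (β₂ x) + M) /
          (L₂ * Real.cos (β₃ x) * dollySpeed M (β₂ x) (u x) ^ 2)) • u') x := by
  simp only [dollyJointRate_eq_div_cos]
  have hturn := (hasFDerivAt_lateralSpeed_div_dollySpeed M hβ₂ hu hE).mul_const L₂⁻¹
  simp only [← div_eq_mul_inv] at hturn
  have hrate := (hasFDerivAt_div_dollySpeed M hβ₂ hu hE).fun_sub hturn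
  refine (hasFDerivAt_div_cos hrate hβ₃ hcos).congr_fderiv ?_
  ext v
  simp only [add_apply, sub_apply, smul_apply, smul_eq_mul]
  field_simp
  ring

end ErrorModel

end TwoTrailer

open TwoTrailer in
theorem stmt_8_general
    (L2 L3 M1 vb b2r b3r ur : ℝ)
    (hL2 : L2 ≠ 0) (hL3 : L3 ≠ 0)
    (C1 : ℝ → ℝ → ℝ → ℝ)
    (hC1 : ∀ β2 β3 u, C1 β2 β3 u = Real.cos β3 * (Real.cos β2 + M1 * u * Real.sin β2))
    (κ : ℝ) (hκ : κ = Real.tan b3r / L3)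
    (hcos : Real.cos b3r ≠ 0)
    (hE : Real.cos b2r + M1 * ur * Real.sin b2r ≠ 0)
    (f : (ℝ × ℝ × ℝ × ℝ) × ℝ → ℝ × ℝ × ℝ × ℝ)
    (hf : ∀ z θ β3 β2 u, f ((z, θ, β3, β2), u) =
      (vb * ((1 - κ * z) * Real.tan θ),
        vb * ((1 - κ * z) * Real.tan (β3 + b3r) / (L3 * Real.cos θ) - κ),
        vb * ((1 - κ * z) / Real.cos θ *
            ((Real.sin (β2 + b2r) - M1 * Real.cos (β2 + b2r) * (u + ur)) /
                (L2 * C1 (β2 + b2r) (β3 + b3r) (u + ur)) -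
              Real.tan (β3 + b3r) / L3) -
          ((Real.sin b2r - M1 * Real.cos b2r * ur) / (L2 * C1 b2r b3r ur) - κ)),
        vb * ((1 - κ * z) / Real.cos θ *
            ((u + ur - Real.sin (β2 + b2r) / L2 + M1 / L2 * Real.cos (β2 + b2r) * (u + ur)) /
              C1 (β2 + b2r) (β3 + b3r) (u + ur)) -
          (ur - Real.sin b2r / L2 + M1 / L2 * Real.cos b2r * ur) / C1 b2r b3r ur))) :
    DifferentiableAt ℝ f ((0, 0, 0, 0), 0) ∧
    ∀ z θ β3 β2 u, fderiv ℝ f ((0, 0, 0, 0), 0) ((z, θ, β3, β2), u) =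
      (vb * θ,
        vb * ((1 + (L3 * κ) ^ 2) / L3 * β3 - κ ^ 2 * z),
        vb * ((L3 * κ * trailerJointRate L2 L3 M1 b3r b2r ur - 1 / L3) * β3 +
            (1 + M1 ^ 2 * ur ^ 2) / (L2 * Real.cos b3r * dollySpeed M1 b2r ur ^ 2) * β2 -
            M1 / (L2 * Real.cos b3r * dollySpeed M1 b2r ur ^ 2) * u -
            κ * trailerJointRate L2 L3 M1 b3r b2r ur * z),
        vb * (L3 * κ * dollyJointRate L2 M1 b3r b2r ur * β3 +
            (L2 * ur * lateralSpeed M1 b2r ur - (1 + M1 ^ 2 * ur ^ 2)) /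
              (L2 * Real.cos b3r * dollySpeed M1 b2r ur ^ 2) * β2 +
            (L2 * Real.cos b2r + M1) / (L2 * Real.cos b3r * dollySpeed M1 b2r ur ^ 2) * u -
            κ * dollyJointRate L2 M1 b3r b2r ur * z)) := by
  set o : (ℝ × ℝ × ℝ × ℝ) × ℝ := ((0, 0, 0, 0), 0)
  have htan : Real.tan b3r = L3 * κ := by rw [hκ, mul_div_cancel₀ _ hL3]
  have hx := hasFDerivAt_fst (𝕜 := ℝ) (p := o)
  have hz := hx.fst
  have hθ := hx.snd.fst
  have hβ3 := hx.snd.snd.fst.add_const b3r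
  have hβ2 := hx.snd.snd.snd.add_const b2r
  have hu := (hasFDerivAt_snd (𝕜 := ℝ) (p := o)).add_const ur
  have hcos0 : Real.cos (o.1.2.2.1 + b3r) ≠ 0 := by simpa [o] using hcos
  have hE0 : dollySpeed M1 (o.1.2.2.2 + b2r) (o.2 + ur) ≠ 0 := by simpa [o, dollySpeed] using hE
  have hz0 : o.1.1 = 0 := rfl
  have hθ0 : o.1.2.1 = 0 := rfl
  have hcomponents :=
    (hasFDerivAt_mul_one_sub_mul_tan vb κ hz hθ hz0 hθ0).prodMk <|
    (hasFDerivAt_mul_arcScale_mul_sub vb κ κ hz hθ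
      (hasFDerivAt_tan_div_const L3 hβ3 hcos0) hz0 hθ0).prodMk <|
    (hasFDerivAt_mul_arcScale_mul_sub vb κ (trailerJointRate L2 L3 M1 b3r b2r ur) hz hθ
      (hasFDerivAt_trailerJointRate L2 L3 M1 hβ3 hβ2 hu hcos0 hE0) hz0 hθ0).prodMk <|
    hasFDerivAt_mul_arcScale_mul_sub vb κ (dollyJointRate L2 M1 b3r b2r ur) hz hθ
      (hasFDerivAt_dollyJointRate hL2 M1 hβ3 hβ2 hu hcos0 hE0) hz0 hθ0
  have hderiv := hcomponents.congr_of_eventuallyEq (f₁ := f) <| .of_forall fun p => by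
    obtain ⟨⟨z, θ, β3, β2⟩, u⟩ := p
    simp only [hf, hC1, arcScale, trailerJointRate, dollyJointRate, lateralSpeed, dollySpeed,
      ← hκ, div_mul_div_comm, mul_comm L3]
  refine ⟨hderiv.differentiableAt, fun z θ β3 β2 u => ?_⟩
  rw [hderiv.fderiv]
  simp [o, htan, hL3, sq, mul_assoc]

/-- Linearization of the spatial path-following error model around a
straight nominal path (β₂ᵣ = β₃ᵣ = 0, uᵣ = 0): the map (x̃, ũ) ↦ f̃(x̃, ũ) is
differentiable at the origin, its Jacobian w.r.t. x̃ = (z̃₃, θ̃₃, β̃₃, β̃₂) is v̄·A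
with A having rows (0,1,0,0), (0,0,1/L₃,0), (0,0,−1/L₃,1/L₂), (0,0,0,−1/L₂)
(expressed column-wise via directional derivatives along the basis directions of x̃),
and its partial derivative w.r.t. ũ is v̄·(0,0,−M₁/L₂,(L₂+M₁)/L₂). -/
theorem stmt_8
    (L2 L3 M1 vb b2r b3r ur : ℝ)
    (hL2 : 0 < L2) (hL3 : 0 < L3)
    (hvb : vb = 1 ∨ vb = -1)
    (hb2r : b2r = 0) (hb3r : b3r = 0) (hur : ur = 0)
    (C1 : ℝ → ℝ → ℝ → ℝ)
    (hC1 : ∀ β2 β3 u, C1 β2 β3 u = Real.cos β3 * (Real.cos β2 + M1 * u * Real.sin β2))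
    (κ : ℝ) (hκ : κ = Real.tan b3r / L3)
    (hcos : Real.cos b3r ≠ 0)
    (hE : Real.cos b2r + M1 * ur * Real.sin b2r ≠ 0)
    (f : (ℝ × ℝ × ℝ × ℝ) × ℝ → ℝ × ℝ × ℝ × ℝ)
    (hf : ∀ z θ β3 β2 u, f ((z, θ, β3, β2), u) =
      ( vb * ((1 - κ * z) * Real.tan θ),
        vb * ((1 - κ * z) * Real.tan (β3 + b3r) / (L3 * Real.cos θ) - κ),
        vb * ( ((1 - κ * z) / Real.cos θ) *
            ( (Real.sin (β2 + b2r) - M1 * Real.cos (β2 + b2r) * (u + ur)) /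
                (L2 * C1 (β2 + b2r) (β3 + b3r) (u + ur)) -
              Real.tan (β3 + b3r) / L3 )
          - ( (Real.sin b2r - M1 * Real.cos b2r * ur) / (L2 * C1 b2r b3r ur) - κ ) ),
        vb * ( ((1 - κ * z) / Real.cos θ) *
            ( ((u + ur) - Real.sin (β2 + b2r) / L2 +
                (M1 / L2) * Real.cos (β2 + b2r) * (u + ur)) /
              C1 (β2 + b2r) (β3 + b3r) (u + ur) )
          - ( (ur - Real.sin b2r / L2 + (M1 / L2) * Real.cos b2r * ur) /
              C1 b2r b3r ur ) ) )) :
    DifferentiableAt ℝ f ((0, 0, 0, 0), 0) ∧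
    -- Jacobian w.r.t. x̃ (columns of v̄·A):
    fderiv ℝ f ((0, 0, 0, 0), 0) ((1, 0, 0, 0), 0) = (0, 0, 0, 0) ∧
    fderiv ℝ f ((0, 0, 0, 0), 0) ((0, 1, 0, 0), 0) = (vb * 1, 0, 0, 0) ∧
    fderiv ℝ f ((0, 0, 0, 0), 0) ((0, 0, 1, 0), 0) =
      (0, vb * (1 / L3), vb * (-(1 / L3)), 0) ∧
    fderiv ℝ f ((0, 0, 0, 0), 0) ((0, 0, 0, 1), 0) =
      (0, 0, vb * (1 / L2), vb * (-(1 / L2))) ∧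
    -- partial derivative w.r.t. ũ:
    fderiv ℝ f ((0, 0, 0, 0), 0) ((0, 0, 0, 0), 1) =
      (0, 0, vb * (-(M1 / L2)), vb * ((L2 + M1) / L2)) := by
  subst hb2r hb3r hur
  obtain ⟨hdiff, hJ⟩ := stmt_8_general L2 L3 M1 vb 0 0 0 hL2.ne' hL3.ne' C1 hC1 κ hκ hcos hE f hf
  have hκ0 : κ = 0 := by simp [hκ]
  simp [hdiff, hJ, hκ0, TwoTrailer.dollySpeed, TwoTrailer.lateralSpeed, neg_div]
end

section
/- The partial derivative of the third component f̃₃ of the spatial path-following error model with respect to β̃₃, evaluated at (x̃, ũ) = (0, 0), equals v̄ · ( sin β₃ᵣ · (sin β₂ᵣ − uᵣ M₁ cos β₂ᵣ) / (L₂ cos²β₃ᵣ · Eᵣ) − 1 / (L₃ cos²β₃ᵣ) ). -/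
/-!
In the joint angle `β3` alone, the model is `v * (ρ * (a / cos β3 - b * tan β3) - c)`, where
neither `a = (sin β2 - M1 * cos β2 * u) / (L2 * (cos β2 + M1 * u * sin β2))` nor `b = 1 / L3`
depends on `β3`. The derivative of `a / cos - b * tan` is `(a * sin - b) / cos ^ 2`.
-/

/-- The factor `C₁` of the general 2-trailer: the ratio of the semitrailer's longitudinal velocity
to that of the tractor at joint angles `β2`, `β3` and tractor curvature `u`. -/
noncomputable def speedRatio (M1 β2 β3 u : ℝ) : ℝ :=
  Real.cos β3 * (Real.cos β2 + M1 * u * Real.sin β2)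

/-- The rate of change of the joint angle `β3` per unit distance travelled by the semitrailer.
With `ρ = (1 - κ z̃₃) / cos θ̃₃`, the error component `f̃₃` is `v̄` times the difference between `ρ`
times the rate at the perturbed configuration and the rate at the nominal one. -/
noncomputable def jointAngleRate (L2 L3 M1 β2 β3 u : ℝ) : ℝ :=
  (Real.sin β2 - M1 * Real.cos β2 * u) / (L2 * speedRatio M1 β2 β3 u) - Real.tan β3 / L3

theorem jointAngleRate_eq_div_cos_sub_mul_tan (L2 L3 M1 β2 β3 u : ℝ) :
    jointAngleRate L2 L3 M1 β2 β3 u =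
      (Real.sin β2 - M1 * Real.cos β2 * u) / (L2 * (Real.cos β2 + M1 * u * Real.sin β2)) /
        Real.cos β3 - 1 / L3 * Real.tan β3 := by
  unfold jointAngleRate speedRatio
  rw [div_div, one_div_mul_eq_div, mul_assoc L2, mul_comm (Real.cos β3)]

theorem hasDerivAt_div_cos_sub_mul_tan (a b : ℝ) {x : ℝ} (hx : Real.cos x ≠ 0) :
    HasDerivAt (fun y => a / Real.cos y - b * Real.tan y)
      ((a * Real.sin x - b) / Real.cos x ^ 2) x := by
  have h_sec : HasDerivAt (fun y => a / Real.cos y) (a * Real.sin x / Real.cos x ^ 2) x := by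
    simpa using (hasDerivAt_const x a).fun_div (Real.hasDerivAt_cos x) hx
  have h_tan : HasDerivAt (fun y => b * Real.tan y) (b / Real.cos x ^ 2) x := by
    simpa only [mul_one_div] using (Real.hasDerivAt_tan hx).const_mul b
  simpa only [sub_div] using h_sec.fun_sub h_tan

theorem stmt_12_general {L2 L3 M1 β2 β3 b3r u : ℝ} (v ρ b2r ur : ℝ) (hL2 : L2 ≠ 0) (hL3 : L3 ≠ 0)
    (hcos : Real.cos (β3 + b3r) ≠ 0) (hE : Real.cos β2 + M1 * u * Real.sin β2 ≠ 0) :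
    HasDerivAt
      (fun β => v * (ρ * jointAngleRate L2 L3 M1 β2 (β + b3r) u -
        jointAngleRate L2 L3 M1 b2r b3r ur))
      (v * (ρ * (Real.sin (β3 + b3r) * (Real.sin β2 - u * M1 * Real.cos β2) /
          (L2 * Real.cos (β3 + b3r) ^ 2 * (Real.cos β2 + M1 * u * Real.sin β2)) -
        1 / (L3 * Real.cos (β3 + b3r) ^ 2)))) β3 := by
  have h_rate : HasDerivAt (fun β => jointAngleRate L2 L3 M1 β2 β u)
      (Real.sin (β3 + b3r) * (Real.sin β2 - u * M1 * Real.cos β2) /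
          (L2 * Real.cos (β3 + b3r) ^ 2 * (Real.cos β2 + M1 * u * Real.sin β2)) -
        1 / (L3 * Real.cos (β3 + b3r) ^ 2)) (β3 + b3r) := by
    simp only [jointAngleRate_eq_div_cos_sub_mul_tan]
    refine (hasDerivAt_div_cos_sub_mul_tan _ _ hcos).congr_deriv ?_
    field_simp [hE]
  exact (((h_rate.comp_add_const β3 b3r).const_mul ρ).sub_const _).const_mul v

/-- ∂f̃₃/∂β̃₃ at the origin equals
v̄·( sin β₃ᵣ (sin β₂ᵣ − uᵣ M₁ cos β₂ᵣ)/(L₂ cos²β₃ᵣ Eᵣ) − 1/(L₃ cos²β₃ᵣ) ). -/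
theorem stmt_12
    (L2 L3 M1 vb b2r b3r ur : ℝ)
    (hL2 : 0 < L2) (hL3 : 0 < L3)
    (hvb : vb = 1 ∨ vb = -1)
    (C1 : ℝ → ℝ → ℝ → ℝ)
    (hC1 : ∀ β2 β3 u, C1 β2 β3 u = Real.cos β3 * (Real.cos β2 + M1 * u * Real.sin β2))
    (κ : ℝ) (hκ : κ = Real.tan b3r / L3)
    (Er : ℝ) (hEr : Er = Real.cos b2r + M1 * ur * Real.sin b2r)
    (hcos : Real.cos b3r ≠ 0) (hE : Er ≠ 0)
    (g : ℝ → ℝ)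
    -- f̃₃ as a function of β̃₃ alone, the other error variables being zero:
    (hg : ∀ β3, g β3 = vb * ( ((1 - κ * 0) / Real.cos 0) *
        ( (Real.sin (0 + b2r) - M1 * Real.cos (0 + b2r) * (0 + ur)) /
            (L2 * C1 (0 + b2r) (β3 + b3r) (0 + ur)) -
          Real.tan (β3 + b3r) / L3 )
      - ( (Real.sin b2r - M1 * Real.cos b2r * ur) / (L2 * C1 b2r b3r ur) - κ ) )) :
    HasDerivAt g
      (vb * ( Real.sin b3r * (Real.sin b2r - ur * M1 * Real.cos b2r) /
          (L2 * (Real.cos b3r) ^ 2 * Er) - 1 / (L3 * (Real.cos b3r) ^ 2) )) 0 := by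
  obtain rfl : C1 = speedRatio M1 := by funext β2 β3 u; exact hC1 β2 β3 u
  subst hκ hEr
  simpa [funext hg, jointAngleRate] using
    stmt_12_general (β3 := 0) (b3r := b3r) vb 1 b2r ur hL2.ne' hL3.ne' (by simpa using hcos) hE
end

section
/- The partial derivative of the third component f̃₃ of the spatial path-following error model with respect to β̃₂, evaluated at (x̃, ũ) = (0, 0), equals v̄ · (1 + uᵣ² M₁²) / (L₂ cos β₃ᵣ · Eᵣ²). -/
/-!
With `a = M₁ u`, put `N = sin β₂ - a cos β₂` and `E = cos β₂ + a sin β₂`. Then `N' = E` and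
`E' = -N`, so `(N / E)' = (E² + N²) / E²`; and `E² + N² = 1 + a²`, because `(E, N)` is the
vector `(1, -a)` rotated by the angle `β₂`. In `β̃₂`, the third component `f̃₃` is an affine
function of `N / E`.
-/

section TrigQuotient

variable (a x : ℝ)

lemma hasDerivAt_sin_sub_mul_cos :
    HasDerivAt (fun y => Real.sin y - a * Real.cos y) (Real.cos x + a * Real.sin x) x :=
  ((Real.hasDerivAt_sin x).fun_sub ((Real.hasDerivAt_cos x).const_mul a)).congr_deriv (by ring)

lemma hasDerivAt_cos_add_mul_sin :
    HasDerivAt (fun y => Real.cos y + a * Real.sin y) (-(Real.sin x - a * Real.cos x)) x :=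
  ((Real.hasDerivAt_cos x).fun_add ((Real.hasDerivAt_sin x).const_mul a)).congr_deriv (by ring)

lemma cos_add_mul_sin_sq_add_sin_sub_mul_cos_sq :
    (Real.cos x + a * Real.sin x) ^ 2 + (Real.sin x - a * Real.cos x) ^ 2 = 1 + a ^ 2 := by
  linear_combination (1 + a ^ 2) * Real.cos_sq_add_sin_sq x

variable {a x}

lemma hasDerivAt_sin_sub_mul_cos_div_cos_add_mul_sin (hE : Real.cos x + a * Real.sin x ≠ 0) :
    HasDerivAt (fun y => (Real.sin y - a * Real.cos y) / (Real.cos y + a * Real.sin y))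
      ((1 + a ^ 2) / (Real.cos x + a * Real.sin x) ^ 2) x := by
  refine ((hasDerivAt_sin_sub_mul_cos a x).fun_div
    (hasDerivAt_cos_add_mul_sin a x) hE).congr_deriv ?_
  rw [← cos_add_mul_sin_sq_add_sin_sub_mul_cos_sq a x]
  ring

end TrigQuotient

/-- The entry `∂f̃₃/∂β̃₂` at an arbitrary error state and for an arbitrary velocity `v`: here
`s = (1 - κ z̃₃) / cos θ̃₃`, `b3 = β̃₃ + β₃ᵣ`, `u = ũ + uᵣ`, `k = tan b3 / L₃`, and `r` is the
nominal rate subtracted in `f̃₃`. -/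
theorem stmt_13_general (v s L2 M1 b2r b3 u k r β2 : ℝ)
    (hden : L2 * (Real.cos b3 * (Real.cos (β2 + b2r) + M1 * u * Real.sin (β2 + b2r))) ≠ 0) :
    HasDerivAt
      (fun β => v * (s * ((Real.sin (β + b2r) - M1 * Real.cos (β + b2r) * u) /
        (L2 * (Real.cos b3 * (Real.cos (β + b2r) + M1 * u * Real.sin (β + b2r)))) - k) - r))
      (v * s * (1 + u ^ 2 * M1 ^ 2) /
        (L2 * Real.cos b3 * (Real.cos (β2 + b2r) + M1 * u * Real.sin (β2 + b2r)) ^ 2)) β2 := by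
  have hE : Real.cos (β2 + b2r) + M1 * u * Real.sin (β2 + b2r) ≠ 0 :=
    right_ne_zero_of_mul (right_ne_zero_of_mul hden)
  have hquot := (hasDerivAt_sin_sub_mul_cos_div_cos_add_mul_sin hE).comp_add_const β2 b2r
  have hfactor (β : ℝ) : (Real.sin (β + b2r) - M1 * Real.cos (β + b2r) * u) /
      (L2 * (Real.cos b3 * (Real.cos (β + b2r) + M1 * u * Real.sin (β + b2r)))) =
      (L2 * Real.cos b3)⁻¹ * ((Real.sin (β + b2r) - M1 * u * Real.cos (β + b2r)) /
        (Real.cos (β + b2r) + M1 * u * Real.sin (β + b2r))) := by field_simp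
  simp only [hfactor]
  exact ((((hquot.const_mul (L2 * Real.cos b3)⁻¹).sub_const k).const_mul s).sub_const r
    |>.const_mul v).congr_deriv (by field_simp)

/-- ∂f̃₃/∂β̃₂ at the origin equals v̄·(1 + uᵣ² M₁²)/(L₂ cos β₃ᵣ Eᵣ²). -/
theorem stmt_13
    (L2 L3 M1 vb b2r b3r ur : ℝ)
    (hL2 : 0 < L2) (hL3 : 0 < L3)
    (hvb : vb = 1 ∨ vb = -1)
    (C1 : ℝ → ℝ → ℝ → ℝ)
    (hC1 : ∀ β2 β3 u, C1 β2 β3 u = Real.cos β3 * (Real.cos β2 + M1 * u * Real.sin β2))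
    (κ : ℝ) (hκ : κ = Real.tan b3r / L3)
    (Er : ℝ) (hEr : Er = Real.cos b2r + M1 * ur * Real.sin b2r)
    (hcos : Real.cos b3r ≠ 0) (hE : Er ≠ 0)
    (g : ℝ → ℝ)
    -- f̃₃ as a function of β̃₂ alone, the other error variables being zero:
    (hg : ∀ β2, g β2 = vb * ( ((1 - κ * 0) / Real.cos 0) *
        ( (Real.sin (β2 + b2r) - M1 * Real.cos (β2 + b2r) * (0 + ur)) /
            (L2 * C1 (β2 + b2r) (0 + b3r) (0 + ur)) -
          Real.tan (0 + b3r) / L3 )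
      - ( (Real.sin b2r - M1 * Real.cos b2r * ur) / (L2 * C1 b2r b3r ur) - κ ) )) :
    HasDerivAt g
      (vb * (1 + ur ^ 2 * M1 ^ 2) / (L2 * Real.cos b3r * Er ^ 2)) 0 := by
  simpa [funext hg, hC1, hEr] using stmt_13_general vb 1 L2 M1 b2r b3r ur (Real.tan b3r / L3)
    ((Real.sin b2r - M1 * Real.cos b2r * ur) / (L2 * C1 b2r b3r ur) - κ) 0
    (mul_ne_zero hL2.ne' (mul_ne_zero hcos (by rwa [zero_add, ← hEr])))
end

section
/- The partial derivative of the third component f̃₃ of the spatial path-following error model with respect to the control ũ, evaluated at (x̃, ũ) = (0, 0), equals −v̄ · M₁ / (L₂ cos β₃ᵣ · Eᵣ²). -/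
/-!
Per unit distance travelled by the last trailer, the dolly turns at a rate that is a linear
fractional function of the control `u`. The derivative of `(a u + b) / (c u + d)` has the constant
numerator `a d - b c`; here `sin² β₂ + cos² β₂ = 1` removes `β₂` from this determinant. All other
terms of `f̃₃` are independent of the control, so they only contribute the factor
`v̄ (1 - κ z̃₃) / cos θ̃₃`.
-/

open Real

theorem hasDerivAt_linear_fractional {𝕜 : Type*} [NontriviallyNormedField 𝕜] {a b c d x : 𝕜}
    (hx : c * x + d ≠ 0) :
    HasDerivAt (fun t => (a * t + b) / (c * t + d)) ((a * d - b * c) / (c * x + d) ^ 2) x := by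
  have affine (p q : 𝕜) : HasDerivAt (fun t => p * t + q) p x := by
    simpa using ((hasDerivAt_id x).const_mul p).add_const q
  exact ((affine a b).fun_div (affine c d) hx).congr_deriv (by ring)

/-- The factor `C₁(β₂, β₃, u)` of the model: the ratio of the velocity of the last trailer to that
of the tractor. -/
noncomputable def trailerSpeedRatio (M₁ β₂ β₃ u : ℝ) : ℝ :=
  cos β₃ * (cos β₂ + M₁ * u * sin β₂)

/-- The rate at which the heading of the dolly (the trailer hitched to the tractor) changes per unit
distance travelled by the last trailer. -/
noncomputable def dollyHeadingRate (L₂ M₁ β₂ β₃ u : ℝ) : ℝ :=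
  (sin β₂ - M₁ * cos β₂ * u) / (L₂ * trailerSpeedRatio M₁ β₂ β₃ u)

/-- The component `f̃₃` of the path-following error model, which gives the rate of change of the
joint angle error `β̃₃`. The errors `z θ β₃ β₂ u` stand for `z̃₃, θ̃₃, β̃₃, β̃₂, ũ`, and the nominal
curvature `κ` is written out as `tan β₃ᵣ / L₃`. -/
noncomputable def jointAngleErrorRate (L₂ L₃ M₁ v β₂ᵣ β₃ᵣ uᵣ z θ β₃ β₂ u : ℝ) : ℝ :=
  v * ((1 - tan β₃ᵣ / L₃ * z) / cos θ *
      (dollyHeadingRate L₂ M₁ (β₂ + β₂ᵣ) (β₃ + β₃ᵣ) (u + uᵣ) - tan (β₃ + β₃ᵣ) / L₃)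
    - (dollyHeadingRate L₂ M₁ β₂ᵣ β₃ᵣ uᵣ - tan β₃ᵣ / L₃))

theorem hasDerivAt_dollyHeadingRate {L₂ M₁ β₂ β₃ u : ℝ} (hL₂ : L₂ ≠ 0)
    (hC : trailerSpeedRatio M₁ β₂ β₃ u ≠ 0) :
    HasDerivAt (dollyHeadingRate L₂ M₁ β₂ β₃)
      (-M₁ / (L₂ * cos β₃ * (cos β₂ + M₁ * u * sin β₂) ^ 2)) u := by
  obtain ⟨hcos, hE⟩ := mul_ne_zero_iff.mp hC
  set k := L₂ * cos β₃
  have hk₀ : k ≠ 0 := mul_ne_zero hL₂ hcos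
  have denominator (t : ℝ) :
      k * M₁ * sin β₂ * t + k * cos β₂ = k * (cos β₂ + M₁ * t * sin β₂) := by ring
  have determinant :
      -(M₁ * cos β₂) * (k * cos β₂) - sin β₂ * (k * M₁ * sin β₂) = -(k * M₁) := by
    linear_combination -(k * M₁) * sin_sq_add_cos_sq β₂
  have quotient : dollyHeadingRate L₂ M₁ β₂ β₃ = fun t =>
      (-(M₁ * cos β₂) * t + sin β₂) / (k * M₁ * sin β₂ * t + k * cos β₂) := by
    funext t
    rw [denominator, dollyHeadingRate, trailerSpeedRatio, ← mul_assoc]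
    ring
  rw [quotient]
  refine (hasDerivAt_linear_fractional ?_).congr_deriv ?_
  · rw [denominator]
    exact mul_ne_zero hk₀ hE
  · rw [determinant, denominator]
    field_simp

theorem stmt_16_general {L₂ L₃ M₁ v β₂ᵣ β₃ᵣ uᵣ z θ β₃ β₂ u : ℝ} (hL₂ : L₂ ≠ 0) (hL₃ : L₃ ≠ 0)
    (hθ : cos θ ≠ 0) (hC : trailerSpeedRatio M₁ (β₂ + β₂ᵣ) (β₃ + β₃ᵣ) (u + uᵣ) ≠ 0) :
    HasDerivAt (jointAngleErrorRate L₂ L₃ M₁ v β₂ᵣ β₃ᵣ uᵣ z θ β₃ β₂)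
      (-v * M₁ * (1 - tan β₃ᵣ / L₃ * z) / (cos θ * (L₂ * cos (β₃ + β₃ᵣ) *
        (cos (β₂ + β₂ᵣ) + M₁ * (u + uᵣ) * sin (β₂ + β₂ᵣ)) ^ 2))) u := by
  have hrate := (hasDerivAt_dollyHeadingRate hL₂ hC).comp_add_const u uᵣ
  refine ((((hrate.sub_const _).const_mul _).sub_const _).const_mul v).congr_deriv ?_
  field_simp

/-- ∂f̃₃/∂ũ at the origin equals −v̄·M₁/(L₂ cos β₃ᵣ Eᵣ²). -/
theorem stmt_16
    (L2 L3 M1 vb b2r b3r ur : ℝ)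
    (hL2 : 0 < L2) (hL3 : 0 < L3)
    (hvb : vb = 1 ∨ vb = -1)
    (C1 : ℝ → ℝ → ℝ → ℝ)
    (hC1 : ∀ β2 β3 u, C1 β2 β3 u = Real.cos β3 * (Real.cos β2 + M1 * u * Real.sin β2))
    (κ : ℝ) (hκ : κ = Real.tan b3r / L3)
    (Er : ℝ) (hEr : Er = Real.cos b2r + M1 * ur * Real.sin b2r)
    (hcos : Real.cos b3r ≠ 0) (hE : Er ≠ 0)
    (g : ℝ → ℝ)
    -- f̃₃ as a function of the control deviation ũ alone, the error state being zero:
    (hg : ∀ u, g u = vb * ( ((1 - κ * 0) / Real.cos 0) *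
        ( (Real.sin (0 + b2r) - M1 * Real.cos (0 + b2r) * (u + ur)) /
            (L2 * C1 (0 + b2r) (0 + b3r) (u + ur)) -
          Real.tan (0 + b3r) / L3 )
      - ( (Real.sin b2r - M1 * Real.cos b2r * ur) / (L2 * C1 b2r b3r ur) - κ ) )) :
    HasDerivAt g
      (-vb * M1 / (L2 * Real.cos b3r * Er ^ 2)) 0 := by
  have hg_eq : g = jointAngleErrorRate L2 L3 M1 vb b2r b3r ur 0 0 0 0 := by
    funext u
    rw [hg, hC1, hC1, hκ]
    rfl
  have hC : trailerSpeedRatio M1 (0 + b2r) (0 + b3r) (0 + ur) ≠ 0 := by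
    simpa only [zero_add, trailerSpeedRatio, ← hEr] using mul_ne_zero hcos hE
  simpa [hg_eq, hEr] using stmt_16_general (v := vb) (z := 0) hL2.ne' hL3.ne' (θ := 0) (by simp) hC
end
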